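/- arXiv:2206.12631 — 2 statements merged into one kernel-verified Lean document; each statement's English description precedes it below -/
import Mathlib

section
/- Let ∼ be an equivalence relation on Ω with partition 𝒫, and define a relation ≈ on Ω by: α ≈ β if and only if αη ∼ βη for all but finitely many words η. Then ≈ is a coherent and reduced equivalence relation on Ω; if ∼ is coherent then α ∼ β implies α ≈ β; and, writing 𝒬 for the type system determined by ≈, one has Fix_V(𝒬) = Fix_V(𝒫) and Stab_V(𝒫) ≤ Stab_V(𝒬). -/
/-!
The relation `≈` says that `αη ∼ βη` holds for cofinitely many `η`, so it inherits the equivalence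
axioms from `∼` by intersecting cofinite sets; coherence and reducedness come from
`η = []`, `η = 0η'` or `η = 1η'`.

If `α ^ g = β` then `(αη) ^ g = βη` for every `η` (`actsOn.append`), and a property of almost all
addresses holds at `αη` for almost all `η` (`eventually_append`). These two facts give
`Fix_V(𝒫) ≤ Fix_V(𝒬)` (using also that `α ^ g` is unique) and `Stab_V(𝒫) ≤ Stab_V(𝒬)`, the latter with
the same cofinite set. For `Fix_V(𝒬) ≤ Fix_V(𝒫)`, take `N` exceeding the length of every address
at which `g` fails to fix `𝒬`. An address of length at least `N` is `αη` with `α` one of the finitely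
many addresses of length `N`, and for each such `α` only finitely many `η` violate
`αη ∼ (αη) ^ g`.
-/

/-- Addresses: finite words over the alphabet `{0,1}` (`Bool`). -/
abbrev Addr : Type := List Bool

/-- Cantor space: infinite words over the alphabet `{0,1}`. -/
abbrev Cantor : Type := ℕ → Bool

/-- Prepend the finite word `α` to the infinite word `w`. -/
def wcat (α : Addr) (w : Cantor) : Cantor := fun n =>
  if h : n < α.length then α.get ⟨n, h⟩ else w (n - α.length)

/-- The cone of the address `α`: the set of infinite words having `α` as a prefix. -/
def cone (α : Addr) : Set Cantor := Set.range (wcat α)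

/-- `g` is a prefix substitution map: there are partitions of Cantor space into cones
`(A i)𝔠` and `(B i)𝔠` such that `g` maps `(A i) w` to `(B i) w`. -/
def IsPrefixSubst (g : Equiv.Perm Cantor) : Prop :=
  ∃ (n : ℕ) (A B : Fin n → Addr),
    (∀ i j, i ≠ j → Disjoint (cone (A i)) (cone (A j))) ∧
    (⋃ i, cone (A i)) = Set.univ ∧
    (∀ i j, i ≠ j → Disjoint (cone (B i)) (cone (B j))) ∧
    (⋃ i, cone (B i)) = Set.univ ∧
    (∀ i w, g (wcat (A i) w) = wcat (B i) w)

/-- Thompson's group `V`, as the set of prefix substitution maps inside `Equiv.Perm Cantor`. -/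
def VSet : Set (Equiv.Perm Cantor) := { g | IsPrefixSubst g }

/-- `α ^ g = β` : `g` maps the cone of `α` onto the cone of `β` by the prefix
substitution `α ↦ β`. -/
def actsOn (g : Equiv.Perm Cantor) (α β : Addr) : Prop :=
  ∀ w, g (wcat α w) = wcat β w

/-- A subset of `Equiv.Perm Cantor` that is closed under the group operations. -/
def IsSubgroupSet (M : Set (Equiv.Perm Cantor)) : Prop :=
  (1 : Equiv.Perm Cantor) ∈ M ∧ (∀ g ∈ M, ∀ h ∈ M, g * h ∈ M) ∧ ∀ g ∈ M, g⁻¹ ∈ M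

/-- `M` is a maximal subgroup of Thompson's group `V`. -/
def IsMaximalSubgroupOfV (M : Set (Equiv.Perm Cantor)) : Prop :=
  IsSubgroupSet M ∧ M ⊆ VSet ∧ M ≠ VSet ∧
    ∀ H : Set (Equiv.Perm Cantor),
      IsSubgroupSet H → M ⊆ H → H ⊆ VSet → H = M ∨ H = VSet

/-- A relation on addresses is coherent if `α ∼ β` implies `α0 ∼ β0` and `α1 ∼ β1`. -/
def Coherent (r : Addr → Addr → Prop) : Prop :=
  ∀ α β, r α β → r (α ++ [false]) (β ++ [false]) ∧ r (α ++ [true]) (β ++ [true])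

/-- A relation on addresses is reduced if `α0 ∼ β0` and `α1 ∼ β1` imply `α ∼ β`. -/
def Reduced (r : Addr → Addr → Prop) : Prop :=
  ∀ α β, r (α ++ [false]) (β ++ [false]) → r (α ++ [true]) (β ++ [true]) → r α β

/-- A type system: a coherent and reduced equivalence relation on addresses
(identified with the partition of `Ω` into its classes). -/
def IsTypeSystem (r : Addr → Addr → Prop) : Prop :=
  Equivalence r ∧ Coherent r ∧ Reduced r

/-- `g` fixes the parts of `r`: for all but finitely many addresses `α`, the image
`α ^ g` is defined and equivalent to `α`. -/
def FixesParts (r : Addr → Addr → Prop) (g : Equiv.Perm Cantor) : Prop :=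
  { α : Addr | ¬ ∃ β, actsOn g α β ∧ r α β }.Finite

/-- `g` stabilizes `r`: on some cofinite set of addresses, `α ^ g` is defined and `g`
preserves equivalence and inequivalence of addresses. -/
def Stabilizes (r : Addr → Addr → Prop) (g : Equiv.Perm Cantor) : Prop :=
  ∃ Ω₀ : Set Addr, Ω₀ᶜ.Finite ∧ (∀ α ∈ Ω₀, ∃ β, actsOn g α β) ∧
    ∀ α ∈ Ω₀, ∀ α' ∈ Ω₀, ∀ β β', actsOn g α β → actsOn g α' β' → (r α α' ↔ r β β')

/-- `Fix_V(𝒫)`: the elements of Thompson's group `V` fixing the parts of `r`. -/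
def FixSet (r : Addr → Addr → Prop) : Set (Equiv.Perm Cantor) :=
  { g | IsPrefixSubst g ∧ FixesParts r g }

/-- `Stab_V(𝒫)`: the elements of Thompson's group `V` stabilizing `r`. -/
def StabSet (r : Addr → Addr → Prop) : Set (Equiv.Perm Cantor) :=
  { g | IsPrefixSubst g ∧ Stabilizes r g }

/-- The type system of `s` is a quotient of that of `r`. -/
def IsQuotientOf (s r : Addr → Addr → Prop) : Prop :=
  IsTypeSystem s ∧ ∀ α β, r α β → s α β

/-- A simple type system: the universal relation is a proper quotient, and every
quotient is either the type system itself or the universal one. -/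
def SimpleTS (r : Addr → Addr → Prop) : Prop :=
  IsTypeSystem r ∧ (∃ α β : Addr, ¬ r α β) ∧
    ∀ s : Addr → Addr → Prop, IsQuotientOf s r →
      (∀ α β, s α β ↔ r α β) ∨ ∀ α β, s α β

/-- The type (equivalence class) of the address `α`. -/
def typeOf (r : Addr → Addr → Prop) (α : Addr) : Set Addr := { β | r α β }

/-- The relation `≈` of Lemma 3.6: `α ≈ β` iff `αη ∼ βη` for all but finitely many
words `η`. -/
def approxRel (r : Addr → Addr → Prop) : Addr → Addr → Prop :=
  fun α β => { η : Addr | ¬ r (α ++ η) (β ++ η) }.Finite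

open Filter in
theorem approxRel_iff {r : Addr → Addr → Prop} {α β : Addr} :
    approxRel r α β ↔ ∀ᶠ η in cofinite, r (α ++ η) (β ++ η) := Iff.rfl

theorem wcat_append (α η : Addr) (w : Cantor) : wcat (α ++ η) w = wcat α (wcat η w) := by
  funext n
  simp only [wcat, List.length_append, List.get_eq_getElem]
  by_cases h : n < α.length
  · simp [h, List.getElem_append_left, Nat.lt_add_right]
  · by_cases h' : n < α.length + η.length
    · have h2 : n - α.length < η.length := by omega
      simp [h, h', h2, List.getElem_append_right (Nat.le_of_not_lt h)]
    · have h2 : ¬ n - α.length < η.length := by omega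
      simp [h, h', h2, Nat.sub_sub]

theorem actsOn.append {g : Equiv.Perm Cantor} {α β : Addr} (h : actsOn g α β) (η : Addr) :
    actsOn g (α ++ η) (β ++ η) := fun w => by
  rw [wcat_append, wcat_append, h]

theorem length_le_of_wcat_eq {β β' : Addr} (h : ∀ w, wcat β w = wcat β' w) :
    β'.length ≤ β.length := by
  by_contra! hlt
  -- Position `β.length` is free on the left and prescribed by `β'` on the right.
  have := congrFun (h fun _ => !β'[β.length]) β.length
  simp [wcat, hlt] at this

theorem actsOn.unique {g : Equiv.Perm Cantor} {α β β' : Addr}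
    (h : actsOn g α β) (h' : actsOn g α β') : β = β' := by
  have hw : ∀ w, wcat β w = wcat β' w := fun w => (h w).symm.trans (h' w)
  have hlen := le_antisymm (length_le_of_wcat_eq fun w => (hw w).symm) (length_le_of_wcat_eq hw)
  refine List.ext_getElem hlen fun n h1 h2 => ?_
  have := congrFun (hw fun _ => false) n
  simpa [wcat, h1, h2] using this

open Filter in
theorem eventually_append {p : Addr → Prop} (hp : ∀ᶠ γ in cofinite, p γ) (α : Addr) :
    ∀ᶠ η in cofinite, p (α ++ η) :=
  (List.append_right_injective α).tendsto_cofinite.eventually hp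

open Filter in
/-- A cofinite property may be checked on the extensions of finitely many pairwise incomparable
addresses covering almost everything, namely those of a fixed length `N`. -/
theorem eventually_of_forall_length {p : Addr → Prop} (N : ℕ)
    (h : ∀ α : Addr, α.length = N → ∀ᶠ η in cofinite, p (α ++ η)) : ∀ᶠ γ in cofinite, p γ := by
  refine ((List.finite_length_lt Bool N).union ((List.finite_length_eq Bool N).biUnion
    fun α hα => Set.Finite.image (α ++ ·) (h α hα))).subset fun γ hγ => ?_
  rcases lt_or_ge γ.length N with hN | hN
  · exact Or.inl hN
  · refine Or.inr (Set.mem_biUnion (x := γ.take N) (by simp [hN]) ⟨γ.drop N, ?_, by simp⟩)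
    simpa using hγ

open Filter in
theorem exists_forall_length_of_eventually {p : Addr → Prop} (h : ∀ᶠ γ in cofinite, p γ) :
    ∃ N : ℕ, ∀ γ : Addr, N ≤ γ.length → p γ := by
  obtain ⟨M, hM⟩ := (Set.Finite.image List.length h).bddAbove
  refine ⟨M + 1, fun γ hγ => ?_⟩
  by_contra hp
  have := hM ⟨γ, hp, rfl⟩
  omega

theorem approxRel_equivalence {r : Addr → Addr → Prop} (hr : Equivalence r) :
    Equivalence (approxRel r) where
  refl _ := approxRel_iff.2 (.of_forall fun _ => hr.refl _)
  symm h := (approxRel_iff.1 h).mono fun _ => hr.symm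
  trans h h' := by
    filter_upwards [approxRel_iff.1 h, approxRel_iff.1 h'] with η h1 h2
    exact hr.trans h1 h2

theorem approxRel_coherent (r : Addr → Addr → Prop) : Coherent (approxRel r) := by
  have key (α β : Addr) (h : approxRel r α β) (b : Bool) :
      approxRel r (α ++ [b]) (β ++ [b]) := by
    rw [approxRel_iff] at h ⊢
    simpa using eventually_append h [b]
  exact fun α β h => ⟨key α β h false, key α β h true⟩

theorem approxRel_reduced (r : Addr → Addr → Prop) : Reduced (approxRel r) := by
  intro α β h0 h1
  rw [approxRel_iff] at h0 h1 ⊢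
  refine eventually_of_forall_length 1 fun γ hγ => ?_
  obtain ⟨b, rfl⟩ := List.length_eq_one_iff.1 hγ
  cases b
  · simpa using h0
  · simpa using h1

theorem Coherent.append {r : Addr → Addr → Prop} (hc : Coherent r) (η : Addr) :
    ∀ {α β : Addr}, r α β → r (α ++ η) (β ++ η) := by
  induction η with
  | nil => simp
  | cons b η ih =>
    intro α β h
    have hb : r (α ++ [b]) (β ++ [b]) := by
      cases b
      · exact (hc α β h).1
      · exact (hc α β h).2
    simpa using ih hb

open Filter in
theorem fixesParts_approxRel_iff (r : Addr → Addr → Prop) (g : Equiv.Perm Cantor) :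
    FixesParts (approxRel r) g ↔ FixesParts r g := by
  change (∀ᶠ α in cofinite, ∃ β, actsOn g α β ∧ approxRel r α β) ↔
    ∀ᶠ α in cofinite, ∃ β, actsOn g α β ∧ r α β
  constructor
  · intro h
    obtain ⟨N, hN⟩ := exists_forall_length_of_eventually h
    refine eventually_of_forall_length N fun α hα => ?_
    obtain ⟨β, hβ, hαβ⟩ := hN α hα.ge
    exact (approxRel_iff.1 hαβ).mono fun η hη => ⟨β ++ η, hβ.append η, hη⟩
  · intro h
    filter_upwards [h] with α hα
    obtain ⟨β, hβ, -⟩ := hα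
    refine ⟨β, hβ, approxRel_iff.2 ?_⟩
    filter_upwards [eventually_append h α] with η hη
    obtain ⟨δ, hδ, hr⟩ := hη
    rwa [(hβ.append η).unique hδ]

open Filter in
theorem Stabilizes.approxRel {r : Addr → Addr → Prop} {g : Equiv.Perm Cantor}
    (h : Stabilizes r g) : Stabilizes (approxRel r) g := by
  obtain ⟨S, hfin, hdef, hS⟩ := h
  refine ⟨S, hfin, hdef, fun α _ α' _ β β' hβ hβ' => ?_⟩
  have hev : ∀ᶠ γ in cofinite, γ ∈ S := hfin
  rw [approxRel_iff, approxRel_iff]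
  refine eventually_congr ?_
  filter_upwards [eventually_append hev α, eventually_append hev α'] with η h1 h2
  exact hS _ h1 _ h2 _ _ (hβ.append η) (hβ'.append η)

/-- For an equivalence relation `∼` on `Ω`, the relation `≈` defined
by `α ≈ β ↔ αη ∼ βη` for all but finitely many `η` is a coherent and reduced
equivalence relation; if `∼` is coherent then `∼`-equivalent addresses are
`≈`-equivalent; and, for the resulting type system `𝒬`, `Fix_V(𝒬) = Fix_V(𝒫)` and
`Stab_V(𝒫) ≤ Stab_V(𝒬)`. -/
theorem approxRel_typeSystem_and_subgroups (r : Addr → Addr → Prop)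
    (hr : Equivalence r) :
    Equivalence (approxRel r) ∧ Coherent (approxRel r) ∧ Reduced (approxRel r) ∧
    (Coherent r → ∀ α β, r α β → approxRel r α β) ∧
    FixSet (approxRel r) = FixSet r ∧ StabSet r ⊆ StabSet (approxRel r) := by
  refine ⟨approxRel_equivalence hr, approxRel_coherent r, approxRel_reduced r,
    fun hc α β h => approxRel_iff.2 (.of_forall fun η => hc.append η h), ?_, ?_⟩
  · ext g
    exact and_congr_right fun _ => fixesParts_approxRel_iff r g
  · exact fun g hg => ⟨hg.1, hg.2.approxRel⟩
end

section
/- Let 𝒫 be a type system with associated equivalence relation ∼, and let U and U′ be clopen subsets of 𝔠 that have the same s-type. Then there exist decompositions U = γ₁𝔠 ∪ … ∪ γₙ𝔠 and U′ = δ₁𝔠 ∪ … ∪ δₙ𝔠 into the same number n of pairwise disjoint cones such that γᵢ ∼ δᵢ for i = 1,…,n. -/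
/-- The defining relations of the semigroup `S(𝒫)`, with one generator for each
address (generators of equivalent addresses being identified): `x_α = x_{α0} + x_{α1}`
and `x_α = x_β` whenever `α ∼ β`.  Sums of generators are encoded as multisets. -/
def stypeRel (r : Addr → Addr → Prop) : Multiset Addr → Multiset Addr → Prop :=
  fun x y =>
    (∃ α : Addr, x = {α} ∧ y = {α ++ [false], α ++ [true]}) ∨
    (∃ α β : Addr, r α β ∧ x = {α} ∧ y = {β})

/-- The congruence presenting the semigroup `S(𝒫)`. -/
def stypeCon (r : Addr → Addr → Prop) : AddCon (Multiset Addr) :=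
  addConGen (stypeRel r)

/-- The multiset `m` encodes a decomposition of `U` into pairwise disjoint cones. -/
def Decomp (U : Set Cantor) (m : Multiset Addr) : Prop :=
  Multiset.Pairwise (fun a b => Disjoint (cone a) (cone b)) m ∧
    U = { w : Cantor | ∃ a ∈ m, w ∈ cone a }

/-- `U` and `U'` have the same s-type: some (equivalently, any) decompositions of `U`
and `U'` into disjoint cones have identified images in `S(𝒫)`. -/
def SameSType (r : Addr → Addr → Prop) (U U' : Set Cantor) : Prop :=
  ∃ m m' : Multiset Addr, m ≠ 0 ∧ m' ≠ 0 ∧ Decomp U m ∧ Decomp U' m' ∧ stypeCon r m m'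

/-! ### Splitting in multisets -/

/-- One occurrence of some `a` in the multiset `x` is replaced by its two children `c₀ a`
and `c₁ a`. -/
def SplitStep {X : Type} (c₀ c₁ : X → X) (x y : Multiset X) : Prop :=
  ∃ a s, x = a ::ₘ s ∧ y = c₀ a ::ₘ c₁ a ::ₘ s

section Splitting

variable {X Y : Type} {c₀ c₁ : X → X}

lemma SplitStep.add_right {x y : Multiset X} (h : SplitStep c₀ c₁ x y) (z : Multiset X) :
    SplitStep c₀ c₁ (x + z) (y + z) := by
  obtain ⟨a, s, rfl, rfl⟩ := h
  exact ⟨a, s + z, by simp, by simp⟩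

lemma splits_add {x y x' y' : Multiset X}
    (h : Relation.ReflTransGen (SplitStep c₀ c₁) x y)
    (h' : Relation.ReflTransGen (SplitStep c₀ c₁) x' y') :
    Relation.ReflTransGen (SplitStep c₀ c₁) (x + x') (y + y') := by
  refine (h.lift (fun t => t + x') fun _ _ hs => hs.add_right x').trans ?_
  refine h'.lift (fun t => y + t) fun t t' hs => ?_
  simpa only [add_comm y] using hs.add_right y

/-- Two splits of the same multiset either coincide or split different occurrences, in which case
they can be performed in either order. -/
lemma splitStep_diamond {x y z : Multiset X} (hy : SplitStep c₀ c₁ x y)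
    (hz : SplitStep c₀ c₁ x z) :
    ∃ t, Relation.ReflGen (SplitStep c₀ c₁) y t ∧
      Relation.ReflTransGen (SplitStep c₀ c₁) z t := by
  obtain ⟨a, s, rfl, rfl⟩ := hy
  obtain ⟨b, s', hx, rfl⟩ := hz
  rcases Multiset.cons_eq_cons.1 hx with ⟨rfl, rfl⟩ | ⟨-, u, rfl, rfl⟩
  · exact ⟨_, .refl, .refl⟩
  · refine ⟨c₀ a ::ₘ c₁ a ::ₘ c₀ b ::ₘ c₁ b ::ₘ u, .single ⟨b, c₀ a ::ₘ c₁ a ::ₘ u, ?_, ?_⟩,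
      .single ⟨a, c₀ b ::ₘ c₁ b ::ₘ u, ?_, rfl⟩⟩ <;>
    simp only [← Multiset.singleton_add] <;> abel

variable (c₀ c₁) in
/-- The congruence on multisets of having a common expansion. -/
def joinCon : AddCon (Multiset X) where
  r := Relation.Join (Relation.ReflTransGen (SplitStep c₀ c₁))
  iseqv := Relation.equivalence_join_reflTransGen fun _ _ _ => splitStep_diamond
  add' := by
    rintro x y x' y' ⟨t, hx, hy⟩ ⟨t', hx', hy'⟩
    exact ⟨t + t', splits_add hx hx', splits_add hy hy'⟩

/-- Splittings lift along a map `f` that commutes with taking children. -/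
lemma exists_lift_splits {d₀ d₁ : Y → Y} (f : X → Y) (h₀ : ∀ a, f (c₀ a) = d₀ (f a))
    (h₁ : ∀ a, f (c₁ a) = d₁ (f a)) (x : Multiset X) {y : Multiset Y}
    (h : Relation.ReflTransGen (SplitStep d₀ d₁) (x.map f) y) :
    ∃ x', Relation.ReflTransGen (SplitStep c₀ c₁) x x' ∧ x'.map f = y := by
  induction h with
  | refl => exact ⟨x, .refl, rfl⟩
  | tail _ hs ih =>
    obtain ⟨x', hx', rfl⟩ := ih
    obtain ⟨b, s, hb, rfl⟩ := hs
    classical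
    obtain ⟨a, ha, rfl, hs⟩ := (Multiset.map_eq_cons _ _ _ _).2 hb
    refine ⟨c₀ a ::ₘ c₁ a ::ₘ x'.erase a,
      hx'.tail ⟨a, x'.erase a, (Multiset.cons_erase ha).symm, rfl⟩, ?_⟩
    simp [h₀, h₁, hs]

lemma exists_lists_of_rel {R : X → Y → Prop} {x : Multiset X} {y : Multiset Y}
    (h : Multiset.Rel R x y) :
    ∃ (l : List X) (l' : List Y), x = l ∧ y = l' ∧ List.Forall₂ R l l' := by
  induction h with
  | zero => exact ⟨[], [], rfl, rfl, .nil⟩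
  | cons hab _ ih =>
    obtain ⟨l, l', rfl, rfl, hl⟩ := ih
    exact ⟨_ :: l, _ :: l', rfl, rfl, .cons hab hl⟩

end Splitting

/-! ### Cones -/

lemma mem_cone_iff (α : Addr) (w : Cantor) :
    w ∈ cone α ↔ ∀ (i : ℕ) (h : i < α.length), w i = α[i] := by
  constructor
  · rintro ⟨v, rfl⟩ i h
    simp [wcat, h]
  · intro h
    refine ⟨fun n => w (n + α.length), funext fun n => ?_⟩
    by_cases hn : n < α.length
    · simp [wcat, hn, h n hn]
    · simp [wcat, hn, Nat.sub_add_cancel (not_lt.1 hn)]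

lemma mem_cone_append_iff (α : Addr) (b : Bool) (w : Cantor) :
    w ∈ cone (α ++ [b]) ↔ w ∈ cone α ∧ w α.length = b := by
  simp only [mem_cone_iff]
  constructor
  · intro h
    refine ⟨fun i hi => ?_, ?_⟩
    · rw [h i (by simp; omega), List.getElem_append_left hi]
    · rw [h α.length (by simp)]; simp
  · rintro ⟨h, hb⟩ i hi
    by_cases hi' : i < α.length
    · rw [h i hi', List.getElem_append_left hi']
    · obtain rfl : i = α.length := by simp at hi; omega
      simp [hb]

lemma multisetPairwise_disjoint_coe (l : List Addr) :
    Multiset.Pairwise (fun a b => Disjoint (cone a) (cone b)) (l : Multiset Addr) ↔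
      l.Pairwise (fun a b => Disjoint (cone a) (cone b)) :=
  haveI : Std.Symm fun a b : Addr => Disjoint (cone a) (cone b) := ⟨fun _ _ h => h.symm⟩
  Multiset.pairwise_coe_iff_pairwise

lemma Decomp.splitStep {U : Set Cantor} {m m' : Multiset Addr} (h : Decomp U m)
    (hs : SplitStep (fun α : Addr => α ++ [false]) (fun α => α ++ [true]) m m') :
    Decomp U m' := by
  obtain ⟨α, s, rfl, rfl⟩ := hs
  obtain ⟨hd, rfl⟩ := h
  induction s using Quotient.inductionOn with | _ l
  have hsub : ∀ b, cone (α ++ [b]) ⊆ cone α := fun b w hw =>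
    ((mem_cone_append_iff α b w).1 hw).1
  simp only [Multiset.quot_mk_to_coe, Multiset.cons_coe] at hd ⊢
  rw [multisetPairwise_disjoint_coe, List.pairwise_cons] at hd
  refine ⟨?_, ?_⟩
  · simp only [multisetPairwise_disjoint_coe, List.pairwise_cons, List.mem_cons]
    refine ⟨?_, fun b hb => (hd.1 b hb).mono_left (hsub _), hd.2⟩
    rintro b (rfl | hb)
    · rw [Set.disjoint_left]
      intro w h₀ h₁
      rw [mem_cone_append_iff] at h₀ h₁
      simp [h₀.2] at h₁
    · exact (hd.1 b hb).mono_left (hsub _)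
  · ext w
    simp only [Set.mem_ofPred_eq, Multiset.mem_coe, List.mem_cons, exists_eq_or_imp,
      mem_cone_append_iff]
    cases w α.length <;> simp

lemma Decomp.splits {U : Set Cantor} {m m' : Multiset Addr} (h : Decomp U m)
    (hs : Relation.ReflTransGen
      (SplitStep (fun α : Addr => α ++ [false]) (fun α => α ++ [true])) m m') :
    Decomp U m' := by
  induction hs with
  | refl => exact h
  | tail _ hs ih => exact ih.splitStep hs

/-! ### Types -/

/-- The setoid on addresses underlying a type system. -/
def typeSetoid (r : Addr → Addr → Prop) (hr : IsTypeSystem r) : Setoid Addr := ⟨r, hr.1⟩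

/-- The type `P_b` of `αb` for any address `α` of type `P`. -/
def typeChild (r : Addr → Addr → Prop) (hr : IsTypeSystem r) (b : Bool) :
    Quotient (typeSetoid r hr) → Quotient (typeSetoid r hr) :=
  Quotient.map (fun α => α ++ [b]) fun α β h => by
    cases b
    exacts [(hr.2.1 α β h).1, (hr.2.1 α β h).2]

lemma join_of_stypeCon (r : Addr → Addr → Prop) (hr : IsTypeSystem r) {m m' : Multiset Addr}
    (h : stypeCon r m m') :
    Relation.Join (Relation.ReflTransGen
      (SplitStep (typeChild r hr false) (typeChild r hr true)))
      (m.map (Quotient.mk (typeSetoid r hr))) (m'.map (Quotient.mk (typeSetoid r hr))) := by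
  let c : AddCon (Multiset Addr) := (joinCon (typeChild r hr false) (typeChild r hr true)).comap
    (Multiset.mapAddMonoidHom (Quotient.mk (typeSetoid r hr))) (map_add _)
  have hle : stypeCon r ≤ c := by
    refine AddCon.addConGen_le.2 ?_
    rintro x y (⟨α, rfl, rfl⟩ | ⟨α, β, hαβ, rfl, rfl⟩)
    · exact ⟨_, .single ⟨Quotient.mk _ α, 0, rfl, rfl⟩, .refl⟩
    · have he : Quotient.mk (typeSetoid r hr) α = Quotient.mk (typeSetoid r hr) β :=
        Quotient.sound hαβ
      refine ⟨{Quotient.mk _ α}, .refl, ?_⟩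
      rw [he]
      exact .refl
  exact hle h

/-- If clopen subsets `U` and `U'` of Cantor space have the same
s-type (with respect to a type system `𝒫`), then they admit decompositions into the
same number of pairwise disjoint cones whose addresses are pairwise equivalent. -/
theorem sameSType_decompositions (r : Addr → Addr → Prop) (hr : IsTypeSystem r)
    (U U' : Set Cantor) (hU : IsClopen U) (hU' : IsClopen U')
    (h : SameSType r U U') :
    ∃ (n : ℕ) (γ δ : Fin n → Addr),
      (∀ i j, i ≠ j → Disjoint (cone (γ i)) (cone (γ j))) ∧
      (∀ i j, i ≠ j → Disjoint (cone (δ i)) (cone (δ j))) ∧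
      U = ⋃ i, cone (γ i) ∧ U' = ⋃ i, cone (δ i) ∧
      ∀ i, r (γ i) (δ i) := by
  obtain ⟨m, m', -, -, hm, hm', hc⟩ := h
  obtain ⟨t, ht, ht'⟩ := join_of_stypeCon r hr hc
  obtain ⟨x, hx, hxt⟩ := exists_lift_splits (c₀ := fun α : Addr => α ++ [false])
    (c₁ := fun α => α ++ [true]) (Quotient.mk (typeSetoid r hr))
    (fun _ => rfl) (fun _ => rfl) m ht
  obtain ⟨y, hy, hyt⟩ := exists_lift_splits (c₀ := fun α : Addr => α ++ [false])
    (c₁ := fun α => α ++ [true]) (Quotient.mk (typeSetoid r hr))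
    (fun _ => rfl) (fun _ => rfl) m' ht'
  obtain ⟨hxd, hxU⟩ := hm.splits hx
  obtain ⟨hyd, hyU⟩ := hm'.splits hy
  have hrel : Multiset.Rel r x y := by
    have h := Multiset.rel_eq.2 (hxt.trans hyt.symm)
    rw [Multiset.rel_map] at h
    exact h.mono fun a _ b _ hab => Quotient.exact hab
  obtain ⟨l, l', rfl, rfl, hll⟩ := exists_lists_of_rel hrel
  rw [multisetPairwise_disjoint_coe] at hxd hyd
  have hlen := hll.length_eq
  have hdisj : ∀ k : List Addr, k.Pairwise (fun a b => Disjoint (cone a) (cone b)) →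
      ∀ i j : Fin k.length, i ≠ j → Disjoint (cone (k.get i)) (cone (k.get j)) := by
    intro k hk i j hij
    rw [List.pairwise_iff_get] at hk
    rcases lt_or_gt_of_ne hij with h | h
    exacts [hk i j h, (hk j i h).symm]
  have hunion : ∀ k : List Addr, {w : Cantor | ∃ a ∈ (k : Multiset Addr), w ∈ cone a} =
      ⋃ i, cone (k.get i) := by
    intro k
    ext w
    simp only [Set.mem_ofPred_eq, Multiset.mem_coe, Set.mem_iUnion, List.mem_iff_get]
    constructor
    · rintro ⟨_, ⟨i, rfl⟩, hw⟩
      exact ⟨i, hw⟩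
    · rintro ⟨i, hw⟩
      exact ⟨_, ⟨i, rfl⟩, hw⟩
  refine ⟨l.length, l.get, fun i => l'.get (i.cast hlen), hdisj l hxd, ?_, hxU.trans (hunion l),
    ?_, fun i => hll.get i.2 (i.cast hlen).2⟩
  · exact fun i j hij => hdisj l' hyd _ _ fun h => hij (Fin.cast_injective _ h)
  · rw [hyU, hunion l']
    exact ((finCongr hlen).surjective.iUnion_comp fun i => cone (l'.get i)).symm
end
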